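/- Let α > 0 and m₁, m₂, m₃ ∈ ℝ with m₃ ≠ 0, and suppose m₃² + m₁² ≤ 2, m₂²(m₁² + 1) ≤ 2, m₁(m₃² − m₂²) = 0, m₁² + m₂² ≤ 1, and m₁²m₂²/m₃² + m₃² ≤ 2. Let D₊ = diag(α, α) and D₋ = diag(α/2, α/2), let L be the 2×2 real matrix with rows (m₁, m₂), (m₃, −m₁m₂/m₃), and let L^# be the 2×2 real matrix with rows (m₁/2, m₃/2), (m₂/2, −m₁m₂/(2m₃)). Then ⟨D₋ L x, L x⟩ ≤ ⟨D₊ x, x⟩ for all x ∈ ℂ² and ⟨D₊ L^# y, L^# y⟩ ≤ ⟨D₋ y, y⟩ for all y ∈ ℂ². -/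

import Mathlib

open Matrix ComplexOrder

/-- The standard Hermitian inner product on `ℂ^n`, conjugate-linear in the
second argument. -/
noncomputable def herm {n : Type*} [Fintype n] (x y : n → ℂ) : ℂ :=
  ∑ i, x i * (starRingEnd ℂ) (y i)

/-!
The Krein adjoint `B` of a contraction `A` into a semidefinite space is again a contraction: if
`D₋` and `D₊ - Aᴴ D₋ A` are positive semidefinite, then so is
`D₋ - Bᴴ D₊ B = (1 - A B)ᴴ D₋ (1 - A B) + Bᴴ (D₊ - Aᴴ D₋ A) B`.
So only `L` has to be examined, and its columns are orthogonal by the choice of the entry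
`-m₁m₂/m₃`. Hence `D₊ - Lᴴ D₋ L` is diagonal, and the claim reduces to bounding the squared norms
of the two columns by `2`.
-/

theorem isHermitian_ofReal_smul_one {n : Type*} [DecidableEq n] (p : ℝ) :
    ((p : ℂ) • (1 : Matrix n n ℂ)).IsHermitian := by
  simp [IsHermitian, conjTranspose_smul]

theorem smul_one_fin_two (c : ℂ) : c • (1 : Matrix (Fin 2) (Fin 2) ℂ) = !![c, 0; 0, c] := by
  rw [smul_one_eq_diagonal, diagonal_fin_two]

section KreinContraction

variable {m n : Type*} [Fintype m] [Fintype n]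

/-- `A` is a contraction from `ℂ^n` with the indefinite form `⟨Dp ·, ·⟩` to `ℂ^m` with the
indefinite form `⟨Dm ·, ·⟩`. -/
def IsKreinContraction (Dp : Matrix n n ℂ) (Dm : Matrix m m ℂ) (A : Matrix m n ℂ) : Prop :=
  ∀ x : n → ℂ, herm (Dm *ᵥ (A *ᵥ x)) (A *ᵥ x) ≤ herm (Dp *ᵥ x) x

/-- `B` is a Krein adjoint of `A : (ℂ^n, ⟨Dp ·, ·⟩) → (ℂ^m, ⟨Dm ·, ·⟩)`, that is,
`⟨Dm A x, y⟩ = ⟨Dp x, B y⟩` for all `x` and `y`, encoded as an identity between matrices. -/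
def IsKreinAdjoint (Dp : Matrix n n ℂ) (Dm : Matrix m m ℂ) (A : Matrix m n ℂ)
    (B : Matrix n m ℂ) : Prop :=
  Dm * A = Bᴴ * Dp

theorem herm_eq_star_dotProduct (x y : n → ℂ) : herm x y = star y ⬝ᵥ x :=
  Finset.sum_congr rfl fun _ _ ↦ mul_comm _ _

theorem star_dotProduct_sub_conjTranspose_mul_mul_mulVec (Dp : Matrix n n ℂ) (Dm : Matrix m m ℂ)
    (A : Matrix m n ℂ) (x : n → ℂ) :
    star x ⬝ᵥ ((Dp - Aᴴ * Dm * A) *ᵥ x) =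
      herm (Dp *ᵥ x) x - herm (Dm *ᵥ (A *ᵥ x)) (A *ᵥ x) := by
  simp only [herm_eq_star_dotProduct, sub_mulVec, dotProduct_sub, star_mulVec, ← mulVec_mulVec,
    dotProduct_mulVec, vecMul_vecMul]

theorem isKreinContraction_iff_posSemidef {Dp : Matrix n n ℂ} {Dm : Matrix m m ℂ}
    (hDp : Dp.IsHermitian) (hDm : Dm.IsHermitian) {A : Matrix m n ℂ} :
    IsKreinContraction Dp Dm A ↔ (Dp - Aᴴ * Dm * A).PosSemidef := by
  have hHermitian : (Dp - Aᴴ * Dm * A).IsHermitian :=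
    hDp.sub (isHermitian_conjTranspose_mul_mul A hDm)
  simp only [IsKreinContraction, posSemidef_iff_dotProduct_mulVec, hHermitian, true_and,
    star_dotProduct_sub_conjTranspose_mul_mul_mulVec, sub_nonneg]

theorem IsKreinAdjoint.sub_conjTranspose_mul_mul [DecidableEq m] {Dp : Matrix n n ℂ}
    {Dm : Matrix m m ℂ} (hDp : Dp.IsHermitian) (hDm : Dm.IsHermitian) {A : Matrix m n ℂ}
    {B : Matrix n m ℂ} (hB : IsKreinAdjoint Dp Dm A B) :
    Dm - Bᴴ * Dp * B =
      (1 - A * B)ᴴ * Dm * (1 - A * B) + Bᴴ * (Dp - Aᴴ * Dm * A) * B := by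
  have hAB : Dm * A = Bᴴ * Dp := hB
  have hBA : Aᴴ * Dm = Dp * B := by
    simpa only [conjTranspose_mul, conjTranspose_conjTranspose, hDp.eq, hDm.eq] using
      congrArg conjTranspose hAB
  have hBAB : Bᴴ * Aᴴ * Dm = Bᴴ * Dp * B := by rw [Matrix.mul_assoc, hBA, Matrix.mul_assoc]
  simp only [conjTranspose_sub, conjTranspose_one, conjTranspose_mul, Matrix.sub_mul,
    Matrix.mul_sub, Matrix.one_mul, Matrix.mul_one, hAB, hBAB, ← Matrix.mul_assoc]
  abel

theorem IsKreinContraction.of_isKreinAdjoint {Dp : Matrix n n ℂ} {Dm : Matrix m m ℂ}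
    (hDp : Dp.IsHermitian) (hDm : Dm.PosSemidef) {A : Matrix m n ℂ} {B : Matrix n m ℂ}
    (hA : IsKreinContraction Dp Dm A) (hB : IsKreinAdjoint Dp Dm A B) :
    IsKreinContraction Dm Dp B := by
  classical
  rw [isKreinContraction_iff_posSemidef hDm.isHermitian hDp,
    hB.sub_conjTranspose_mul_mul hDp hDm.isHermitian]
  rw [isKreinContraction_iff_posSemidef hDp hDm.isHermitian] at hA
  exact (hDm.conjTranspose_mul_mul_same _).add (hA.conjTranspose_mul_mul_same B)

theorem isKreinContraction_smul_one_of_orthogonal_columns [DecidableEq m] [DecidableEq n]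
    {A : Matrix m n ℂ} {d : n → ℝ} (hA : Aᴴ * A = diagonal fun i ↦ (d i : ℂ)) {p q : ℝ}
    (hd : ∀ i, q * d i ≤ p) :
    IsKreinContraction ((p : ℂ) • 1) ((q : ℂ) • 1) A := by
  have hdiag : (p : ℂ) • (1 : Matrix n n ℂ) - Aᴴ * ((q : ℂ) • (1 : Matrix m m ℂ)) * A =
      diagonal fun i ↦ ((p - q * d i : ℝ) : ℂ) := by
    rw [Matrix.mul_smul, Matrix.mul_one, Matrix.smul_mul, hA, smul_one_eq_diagonal,
      ← diagonal_smul, diagonal_sub]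
    simp
  rw [isKreinContraction_iff_posSemidef (isHermitian_ofReal_smul_one p)
    (isHermitian_ofReal_smul_one q), hdiag, posSemidef_diagonal_iff]
  exact fun i ↦ Complex.zero_le_real.mpr (sub_nonneg.mpr (hd i))

end KreinContraction

section Tadpole

/-- The matrix `L` of the vertex condition on the tadpole graph, with parameters `m₁, m₂, m₃`. -/
noncomputable def tadpoleMatrix (m1 m2 m3 : ℝ) : Matrix (Fin 2) (Fin 2) ℂ :=
  !![(m1 : ℂ), (m2 : ℂ); (m3 : ℂ), -((m1 * m2 / m3 : ℝ) : ℂ)]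

/-- The matrix `L^#`, the Krein adjoint of `tadpoleMatrix` for the forms `α • 1` and `(α / 2) • 1`;
it does not depend on `α`. -/
noncomputable def tadpoleKreinAdjoint (m1 m2 m3 : ℝ) : Matrix (Fin 2) (Fin 2) ℂ :=
  !![((m1 / 2 : ℝ) : ℂ), ((m3 / 2 : ℝ) : ℂ);
     ((m2 / 2 : ℝ) : ℂ), -((m1 * m2 / (2 * m3) : ℝ) : ℂ)]

theorem isKreinAdjoint_tadpoleKreinAdjoint (a m1 m2 m3 : ℝ) :
    IsKreinAdjoint ((a : ℂ) • 1) (((a / 2 : ℝ) : ℂ) • 1) (tadpoleMatrix m1 m2 m3)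
      (tadpoleKreinAdjoint m1 m2 m3) := by
  have hhalf : (tadpoleKreinAdjoint m1 m2 m3)ᴴ = (1 / 2 : ℂ) • tadpoleMatrix m1 m2 m3 := by
    ext i j
    fin_cases i <;> fin_cases j <;> simp [tadpoleKreinAdjoint, tadpoleMatrix] <;> ring
  rw [IsKreinAdjoint, hhalf, Matrix.smul_mul, Matrix.one_mul, Matrix.mul_smul, Matrix.mul_one,
    smul_smul]
  push_cast
  ring_nf

theorem tadpoleMatrix_conjTranspose_mul_self (m1 m2 : ℝ) {m3 : ℝ} (hm3 : m3 ≠ 0) :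
    (tadpoleMatrix m1 m2 m3)ᴴ * tadpoleMatrix m1 m2 m3 =
      diagonal fun i ↦ ((![m1 ^ 2 + m3 ^ 2, m2 ^ 2 * (m1 ^ 2 + m3 ^ 2) / m3 ^ 2] i : ℝ) : ℂ) := by
  have hm3' : (m3 : ℂ) ≠ 0 := Complex.ofReal_ne_zero.mpr hm3
  ext i j
  fin_cases i <;> fin_cases j <;>
    simp [tadpoleMatrix, Matrix.mul_apply, Fin.sum_univ_two] <;> field_simp <;> ring

theorem tadpole_derivative_contraction_general {a m1 m2 m3 : ℝ} (ha : 0 ≤ a) (hm3 : m3 ≠ 0)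
    (hcol₁ : m1 ^ 2 + m3 ^ 2 ≤ 2) (hcol₂ : m2 ^ 2 * (m1 ^ 2 + m3 ^ 2) ≤ 2 * m3 ^ 2) :
    IsKreinContraction ((a : ℂ) • 1) (((a / 2 : ℝ) : ℂ) • 1) (tadpoleMatrix m1 m2 m3) ∧
      IsKreinContraction (((a / 2 : ℝ) : ℂ) • 1) ((a : ℂ) • 1) (tadpoleKreinAdjoint m1 m2 m3) := by
  have hcol₂' : m2 ^ 2 * (m1 ^ 2 + m3 ^ 2) / m3 ^ 2 ≤ 2 := (div_le_iff₀ (by positivity)).mpr hcol₂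
  have hL : IsKreinContraction ((a : ℂ) • 1) (((a / 2 : ℝ) : ℂ) • 1) (tadpoleMatrix m1 m2 m3) := by
    refine isKreinContraction_smul_one_of_orthogonal_columns
      (tadpoleMatrix_conjTranspose_mul_self m1 m2 hm3) (Fin.forall_fin_two.mpr ⟨?_, ?_⟩)
    · change a / 2 * (m1 ^ 2 + m3 ^ 2) ≤ a
      nlinarith
    · change a / 2 * (m2 ^ 2 * (m1 ^ 2 + m3 ^ 2) / m3 ^ 2) ≤ a
      nlinarith
  have hDm : (((a / 2 : ℝ) : ℂ) • (1 : Matrix (Fin 2) (Fin 2) ℂ)).PosSemidef :=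
    PosSemidef.one.smul (Complex.zero_le_real.mpr (by positivity))
  exact ⟨hL, hL.of_isKreinAdjoint (isHermitian_ofReal_smul_one a) hDm
    (isKreinAdjoint_tadpoleKreinAdjoint a m1 m2 m3)⟩

theorem tadpole_second_column_bound {m1 m2 m3 : ℝ} (hcol₁ : m3 ^ 2 + m1 ^ 2 ≤ 2)
    (hm2 : m2 ^ 2 * (m1 ^ 2 + 1) ≤ 2) (hprod : m1 * (m3 ^ 2 - m2 ^ 2) = 0) :
    m2 ^ 2 * (m1 ^ 2 + m3 ^ 2) ≤ 2 * m3 ^ 2 := by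
  rcases mul_eq_zero.mp hprod with rfl | hsq
  · nlinarith [sq_nonneg m3]
  · rw [← sub_eq_zero.mp hsq]
    nlinarith [sq_nonneg m3]

end Tadpole

/-- Example 4.25: under the stated parameter conditions, `L` is a `(𝒦₊,𝒦₋)`-contraction
and its Krein adjoint `L^#` is a `(𝒦₋,𝒦₊)`-contraction, where `𝒦₊ = (ℂ², ⟨D₊·,·⟩)` and
`𝒦₋ = (ℂ², ⟨D₋·,·⟩)` with `D₊ = diag(α,α)`, `D₋ = diag(α/2,α/2)`. -/
theorem tadpole_derivative_contraction (a m1 m2 m3 : ℝ) (ha : 0 < a) (hm3 : m3 ≠ 0)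
    (h1 : m3 ^ 2 + m1 ^ 2 ≤ 2)
    (h2 : m2 ^ 2 * (m1 ^ 2 + 1) ≤ 2)
    (h3 : m1 * (m3 ^ 2 - m2 ^ 2) = 0)
    (h4 : m1 ^ 2 + m2 ^ 2 ≤ 1)
    (h5 : m1 ^ 2 * m2 ^ 2 / m3 ^ 2 + m3 ^ 2 ≤ 2)
    (Dp Dm L Lsharp : Matrix (Fin 2) (Fin 2) ℂ)
    (hDp : Dp = !![(a : ℂ), 0; 0, (a : ℂ)])
    (hDm : Dm = !![((a / 2 : ℝ) : ℂ), 0; 0, ((a / 2 : ℝ) : ℂ)])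
    (hL : L = !![(m1 : ℂ), (m2 : ℂ); (m3 : ℂ), -((m1 * m2 / m3 : ℝ) : ℂ)])
    (hLs : Lsharp = !![((m1 / 2 : ℝ) : ℂ), ((m3 / 2 : ℝ) : ℂ);
                       ((m2 / 2 : ℝ) : ℂ), -((m1 * m2 / (2 * m3) : ℝ) : ℂ)]) :
    (∀ x : Fin 2 → ℂ,
        herm (Dm.mulVec (L.mulVec x)) (L.mulVec x) ≤ herm (Dp.mulVec x) x) ∧
    (∀ y : Fin 2 → ℂ,
        herm (Dp.mulVec (Lsharp.mulVec y)) (Lsharp.mulVec y) ≤ herm (Dm.mulVec y) y) := by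
  rw [← smul_one_fin_two] at hDp hDm
  subst hDp hDm hL hLs
  exact tadpole_derivative_contraction_general ha.le hm3 (by linarith)
    (tadpole_second_column_bound h1 h2 h3)
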